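/- (Lemma 3.3, full Euler case.) Let (ρ,u,s) be a classical solution of the full compressible Euler equations on ℝⁿ × [0,T] satisfying the decay, integrability and entropy conditions. If 1 < γ ≤ 1 + 2/n, then for all t ∈ [0,T]: (n(γ−1)/2) E(0) t² + F(0) t + G(0) ≤ G(t) ≤ E(0) t² + F(0) t + G(0). If γ > 1 + 2/n, then for all t ∈ [0,T]: E(0) t² + F(0) t + G(0) ≤ G(t) ≤ (n(γ−1)/2) E(0) t² + F(0) t + G(0). -/

import Mathlib

open MeasureTheory Filter
open scoped InnerProductSpace

noncomputable section

/-- A classical solution of the full compressible Euler equations for a polytropic gas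
with pressure `p = exp(s/c_ν) ρ^γ`:
`∂ₜρ + div(ρu) = 0`, `∂ₜ(ρuᵢ) + div(ρuᵢu) + ∂ᵢp = 0`,
`∂ₜ((1/2)ρ|u|² + p/(γ−1)) + div(((1/2)ρ|u|² + γp/(γ−1))u) = 0` on `ℝⁿ × [0,T]`,
together with the decay conditions (9-25), the entropy lower bound `s ≥ s₁`, the
integrability conditions on the physical quantities, and differentiability of these
quantities with derivatives computed by differentiating under the integral sign. -/
structure FullEulerSolution (n : ℕ) (γ cν s₁ T : ℝ) where
  ρ : ℝ → EuclideanSpace ℝ (Fin n) → ℝ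
  u : ℝ → EuclideanSpace ℝ (Fin n) → EuclideanSpace ℝ (Fin n)
  s : ℝ → EuclideanSpace ℝ (Fin n) → ℝ
  ρ_nonneg : ∀ t ∈ Set.Icc 0 T, ∀ x, 0 ≤ ρ t x
  /-- the entropy condition: `s(x,t) ≥ s₁ = min_x s(x,0)`. -/
  entropy_lb : ∀ t ∈ Set.Icc 0 T, ∀ x, s₁ ≤ s t x
  smooth_ρ : ContDiffOn ℝ 1 (fun p : ℝ × EuclideanSpace ℝ (Fin n) => ρ p.1 p.2)
    (Set.Icc 0 T ×ˢ Set.univ)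
  smooth_u : ContDiffOn ℝ 1 (fun p : ℝ × EuclideanSpace ℝ (Fin n) => u p.1 p.2)
    (Set.Icc 0 T ×ˢ Set.univ)
  smooth_s : ContDiffOn ℝ 1 (fun p : ℝ × EuclideanSpace ℝ (Fin n) => s p.1 p.2)
    (Set.Icc 0 T ×ˢ Set.univ)
  /-- Conservation of mass: `∂ₜρ + div(ρu) = 0`. -/
  mass_eq : ∀ t ∈ Set.Icc 0 T, ∀ x,
    deriv (fun τ => ρ τ x) t
      + ∑ i : Fin n, fderiv ℝ (fun y => ρ t y * u t y i) x (EuclideanSpace.single i 1) = 0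
  /-- Conservation of momentum: `∂ₜ(ρuᵢ) + div(ρuᵢu) + ∂ᵢp = 0`. -/
  momentum_eq : ∀ t ∈ Set.Icc 0 T, ∀ x, ∀ i : Fin n,
    deriv (fun τ => ρ τ x * u τ x i) t
      + ∑ j : Fin n, fderiv ℝ (fun y => ρ t y * u t y i * u t y j) x (EuclideanSpace.single j 1)
      + fderiv ℝ (fun y => Real.exp (s t y / cν) * ρ t y ^ γ) x (EuclideanSpace.single i 1)
      = 0
  /-- Conservation of energy:
  `∂ₜ((1/2)ρ|u|² + p/(γ−1)) + div(((1/2)ρ|u|² + γp/(γ−1))u) = 0`. -/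
  energy_eq : ∀ t ∈ Set.Icc 0 T, ∀ x,
    deriv (fun τ => (1 / 2 : ℝ) * ρ τ x * ‖u τ x‖ ^ 2
        + Real.exp (s τ x / cν) * ρ τ x ^ γ / (γ - 1)) t
      + ∑ i : Fin n, fderiv ℝ (fun y => ((1 / 2 : ℝ) * ρ t y * ‖u t y‖ ^ 2
          + γ * (Real.exp (s t y / cν) * ρ t y ^ γ) / (γ - 1)) * u t y i) x
          (EuclideanSpace.single i 1) = 0
  /-- decay: `|u| → 0` as `|x| → ∞`. -/
  decay_u : ∀ t ∈ Set.Icc 0 T,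
    Tendsto (fun x => ‖u t x‖) (Bornology.cobounded _) (nhds 0)
  /-- decay: `ρ|u| = o(|x|^{-(n+1)})`. -/
  decay_ρu : ∀ t ∈ Set.Icc 0 T,
    Tendsto (fun x => ‖x‖ ^ (n + 1) * (ρ t x * ‖u t x‖)) (Bornology.cobounded _) (nhds 0)
  /-- decay: `|∇ₓu| = o(|x|^{-n})`. -/
  decay_gradu : ∀ t ∈ Set.Icc 0 T,
    Tendsto (fun x => ‖x‖ ^ n * ‖fderiv ℝ (u t) x‖) (Bornology.cobounded _) (nhds 0)
  /-- decay: the pressure `p = o(|x|^{-n})`. -/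
  decay_p : ∀ t ∈ Set.Icc 0 T,
    Tendsto (fun x => ‖x‖ ^ n * (Real.exp (s t x / cν) * ρ t x ^ γ))
      (Bornology.cobounded _) (nhds 0)
  int_ρ : ∀ t ∈ Set.Icc 0 T, Integrable (ρ t)
  int_ρu : ∀ t ∈ Set.Icc 0 T, Integrable (fun x => ρ t x * ‖u t x‖)
  int_ρu2 : ∀ t ∈ Set.Icc 0 T, Integrable (fun x => ρ t x * ‖u t x‖ ^ 2)
  int_ρx2 : ∀ t ∈ Set.Icc 0 T, Integrable (fun x => ρ t x * ‖x‖ ^ 2)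
  int_ρux : ∀ t ∈ Set.Icc 0 T, Integrable (fun x => ρ t x * ‖u t x‖ * ‖x‖)
  int_p : ∀ t ∈ Set.Icc 0 T, Integrable (fun x => Real.exp (s t x / cν) * ρ t x ^ γ)
  /-- `M(t) = ∫ρ` is differentiable, by differentiation under the integral sign. -/
  hM : ∀ t ∈ Set.Icc 0 T,
    HasDerivAt (fun τ => ∫ x, ρ τ x) (∫ x, deriv (fun τ => ρ τ x) t) t
  /-- `ℙ(t) = ∫ρu` is differentiable, by differentiation under the integral sign. -/
  hP : ∀ t ∈ Set.Icc 0 T,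
    HasDerivAt (fun τ => ∫ x, ρ τ x • u τ x) (∫ x, deriv (fun τ => ρ τ x • u τ x) t) t
  /-- `F(t) = ∫ρ u·x` is differentiable, by differentiation under the integral sign. -/
  hF : ∀ t ∈ Set.Icc 0 T,
    HasDerivAt (fun τ => ∫ x, ρ τ x * ⟪u τ x, x⟫_ℝ)
      (∫ x, deriv (fun τ => ρ τ x * ⟪u τ x, x⟫_ℝ) t) t
  /-- `G(t) = (1/2)∫ρ|x|²` is differentiable, by differentiation under the integral sign. -/
  hG : ∀ t ∈ Set.Icc 0 T,
    HasDerivAt (fun τ => (1 / 2 : ℝ) * ∫ x, ρ τ x * ‖x‖ ^ 2)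
      ((1 / 2 : ℝ) * ∫ x, deriv (fun τ => ρ τ x * ‖x‖ ^ 2) t) t
  /-- `E(t) = E_k(t) + E_i(t)` is differentiable, by differentiation under the integral
  sign. -/
  hE : ∀ t ∈ Set.Icc 0 T,
    HasDerivAt (fun τ => ∫ x, ((1 / 2 : ℝ) * ρ τ x * ‖u τ x‖ ^ 2
        + Real.exp (s τ x / cν) * ρ τ x ^ γ / (γ - 1)))
      (∫ x, deriv (fun τ => (1 / 2 : ℝ) * ρ τ x * ‖u τ x‖ ^ 2
        + Real.exp (s τ x / cν) * ρ τ x ^ γ / (γ - 1)) t) t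

namespace FullEulerSolution

variable {n : ℕ} {γ cν s₁ T : ℝ}

/-- The mass `M(t) = ∫ ρ dx`. -/
def M (S : FullEulerSolution n γ cν s₁ T) (t : ℝ) : ℝ := ∫ x, S.ρ t x

/-- The momentum `ℙ(t) = ∫ ρ u dx`. -/
def P (S : FullEulerSolution n γ cν s₁ T) (t : ℝ) : EuclideanSpace ℝ (Fin n) :=
  ∫ x, S.ρ t x • S.u t x

/-- The momentum weight `F(t) = ∫ ρ u·x dx`. -/
def F (S : FullEulerSolution n γ cν s₁ T) (t : ℝ) : ℝ := ∫ x, S.ρ t x * ⟪S.u t x, x⟫_ℝ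

/-- The momentum of inertia `G(t) = (1/2) ∫ ρ |x|² dx`. -/
def G (S : FullEulerSolution n γ cν s₁ T) (t : ℝ) : ℝ :=
  (1 / 2 : ℝ) * ∫ x, S.ρ t x * ‖x‖ ^ 2

/-- The kinetic energy `E_k(t) = (1/2) ∫ ρ |u|² dx`. -/
def Ek (S : FullEulerSolution n γ cν s₁ T) (t : ℝ) : ℝ :=
  (1 / 2 : ℝ) * ∫ x, S.ρ t x * ‖S.u t x‖ ^ 2

/-- The internal energy `E_i(t) = (1/(γ−1)) ∫ p dx` with `p = exp(s/c_ν) ρ^γ`. -/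
def Ei (S : FullEulerSolution n γ cν s₁ T) (t : ℝ) : ℝ :=
  (1 / (γ - 1)) * ∫ x, Real.exp (S.s t x / cν) * S.ρ t x ^ γ

/-- The total energy `E(t) = E_k(t) + E_i(t)`. -/
def E (S : FullEulerSolution n γ cν s₁ T) (t : ℝ) : ℝ := S.Ek t + S.Ei t

/-- The functional `J(t) = G(t) − (t+1)F(t) + (t+1)² E(t)`. -/
def J (S : FullEulerSolution n γ cν s₁ T) (t : ℝ) : ℝ :=
  S.G t - (t + 1) * S.F t + (t + 1) ^ 2 * S.E t

end FullEulerSolution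

/-!
Each balance law `∂ₜq + div V = 0` is tested against a weight `w` times a cutoff at scale `N`.
If `w` and `∇w` grow no faster than the integrability of `V` allows, the error made by the cutoff
vanishes as `N → ∞`, and `∫ w q` is a primitive in time of `∫ ∇w · V`. The weights `|x|²/2` and
`xᵢ`, applied to mass and momentum, give `G' = F` and `F' = 2 E_k + n(γ − 1) E_i`. As
`E = E_k + E_i` is conserved and both energies are nonnegative, `F'` lies between
`min(2, n(γ − 1)) E(0)` and `max(2, n(γ − 1)) E(0)`, and two integrations in time finish the proof.
-/

open Set Topology

section Primitive

variable {E : Type*} [NormedAddCommGroup E] [NormedSpace ℝ E]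

/-- `F` is an indefinite integral of `f` on `[a, b]`: the integrated form of `F' = f`, which, unlike
the pointwise form, passes to limits of functions with bounded derivatives. -/
def IsPrimitiveOn (F f : ℝ → E) (a b : ℝ) : Prop :=
  ∀ t ∈ Icc a b, IntervalIntegrable f volume a t ∧ F t - F a = ∫ τ in a..t, f τ

namespace IsPrimitiveOn

variable {F G f g : ℝ → E} {a b t : ℝ}

lemma congr (h : IsPrimitiveOn F f a b) (hFG : EqOn F G (Icc a b)) (hfg : EqOn f g (Icc a b)) :
    IsPrimitiveOn G g a b := by
  intro t ht
  have hfg' : EqOn f g (uIcc a t) := by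
    rw [uIcc_of_le ht.1]
    exact hfg.mono (Icc_subset_Icc_right ht.2)
  rw [← hFG ht, ← hFG (left_mem_Icc.2 (ht.1.trans ht.2)),
    ← intervalIntegral.integral_congr hfg']
  exact ⟨(h t ht).1.congr (hfg'.mono uIoc_subset_uIcc), (h t ht).2⟩

lemma finsetSum {ι : Type*} {s : Finset ι} {F f : ι → ℝ → E}
    (h : ∀ i ∈ s, IsPrimitiveOn (F i) (f i) a b) :
    IsPrimitiveOn (fun t => ∑ i ∈ s, F i t) (fun t => ∑ i ∈ s, f i t) a b := by
  intro t ht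
  have hint : ∀ i ∈ s, IntervalIntegrable (f i) volume a t := fun i hi => (h i hi t ht).1
  refine ⟨by simpa only [Finset.sum_fn] using IntervalIntegrable.sum s hint, ?_⟩
  rw [intervalIntegral.integral_finsetSum hint, ← Finset.sum_sub_distrib]
  exact Finset.sum_congr rfl fun i hi => (h i hi t ht).2

lemma le_of_le {F G f g : ℝ → ℝ} (hF : IsPrimitiveOn F f a b) (hG : IsPrimitiveOn G g a b)
    (ha : F a ≤ G a) (hfg : ∀ τ ∈ Icc a b, f τ ≤ g τ) (ht : t ∈ Icc a b) : F t ≤ G t := by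
  have hmono := intervalIntegral.integral_mono_on ht.1 (hF t ht).1 (hG t ht).1
    fun τ hτ => hfg τ (Icc_subset_Icc_right ht.2 hτ)
  rw [← (hF t ht).2, ← (hG t ht).2] at hmono
  linarith

variable [CompleteSpace E]

lemma of_hasDerivAt (hF : ∀ τ ∈ Icc a b, HasDerivAt F (f τ) τ) (hf : ContinuousOn f (Icc a b)) :
    IsPrimitiveOn F f a b := by
  intro t ht
  have hsub : uIcc a t ⊆ Icc a b := by
    rw [uIcc_of_le ht.1]
    exact Icc_subset_Icc_right ht.2
  have hint : IntervalIntegrable f volume a t := (hf.mono hsub).intervalIntegrable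
  exact ⟨hint,
    (intervalIntegral.integral_eq_sub_of_hasDerivAt (fun τ hτ => hF τ (hsub hτ)) hint).symm⟩

lemma of_tendsto {Φ φ : ℕ → ℝ → E} {C : ℝ} (hΦ : ∀ N, ContinuousOn (Φ N) (Icc a b))
    (hderiv : ∀ N, ∀ τ ∈ Ioo a b, HasDerivAt (Φ N) (φ N τ) τ)
    (hC : ∀ N, ∀ τ ∈ Ioo a b, ‖φ N τ‖ ≤ C)
    (hF : ∀ τ ∈ Icc a b, Tendsto (fun N => Φ N τ) atTop (𝓝 (F τ)))
    (hf : ∀ τ ∈ Ioo a b, Tendsto (fun N => φ N τ) atTop (𝓝 (f τ))) : IsPrimitiveOn F f a b := by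
  intro t ht
  have hmem : ∀ᵐ τ ∂volume.restrict (uIoc a t), τ ∈ Ioo a b := by
    rw [uIoc_of_le ht.1, ae_restrict_iff' measurableSet_Ioc]
    filter_upwards [Measure.ae_ne volume t] with τ hne hτ
    exact ⟨hτ.1, (hτ.2.lt_of_ne hne).trans_le ht.2⟩
  have hmeas : ∀ N, AEStronglyMeasurable (φ N) (volume.restrict (uIoc a t)) := fun N =>
    (aestronglyMeasurable_deriv (Φ N) _).congr (hmem.mono fun τ hτ => (hderiv N τ hτ).deriv)
  have hint : ∀ N, IntervalIntegrable (φ N) volume a t := fun N =>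
    (intervalIntegrable_const (c := C)).mono_fun' (hmeas N) (hmem.mono (hC N))
  have hfC : ∀ τ ∈ Ioo a b, ‖f τ‖ ≤ C := fun τ hτ =>
    le_of_tendsto (hf τ hτ).norm (Eventually.of_forall fun N => hC N τ hτ)
  have hftc : ∀ N, Φ N t - Φ N a = ∫ τ in a..t, φ N τ := fun N =>
    (intervalIntegral.integral_eq_sub_of_hasDerivAt_of_le ht.1
      ((hΦ N).mono (Icc_subset_Icc_right ht.2))
      (fun τ hτ => hderiv N τ (Ioo_subset_Ioo_right ht.2 hτ)) (hint N)).symm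
  have hlim : Tendsto (fun N => Φ N t - Φ N a) atTop (𝓝 (∫ τ in a..t, f τ)) := by
    simp_rw [hftc]
    rw [ae_restrict_iff' measurableSet_uIoc] at hmem
    exact intervalIntegral.tendsto_integral_filter_of_dominated_convergence (fun _ => C)
      (Eventually.of_forall hmeas)
      (Eventually.of_forall fun N => hmem.mono fun τ h hτ => hC N τ (h hτ))
      intervalIntegrable_const (hmem.mono fun τ h hτ => hf τ (h hτ))
  refine ⟨(intervalIntegrable_const (c := C)).mono_fun'
    (aestronglyMeasurable_of_tendsto_ae atTop hmeas (hmem.mono hf)) (hmem.mono hfC), ?_⟩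
  exact tendsto_nhds_unique
    ((hF t ht).sub (hF a (left_mem_Icc.2 (ht.1.trans ht.2)))) hlim

lemma affine (c v a b : ℝ) : IsPrimitiveOn (fun t => c * t + v) (fun _ => c) a b :=
  of_hasDerivAt (fun τ _ => by simpa using ((hasDerivAt_id τ).const_mul c).add_const v)
    continuousOn_const

lemma quadratic (c v g a b : ℝ) :
    IsPrimitiveOn (fun t => c * t ^ 2 + v * t + g) (fun t => 2 * c * t + v) a b := by
  refine of_hasDerivAt (fun τ _ => ?_) (by fun_prop)
  refine ((((hasDerivAt_pow 2 τ).const_mul c).add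
    ((hasDerivAt_id τ).const_mul v)).add_const g).congr_deriv ?_
  push_cast
  ring

end IsPrimitiveOn

end Primitive

section Slice

variable {X F : Type*} [NormedAddCommGroup X] [NormedSpace ℝ X]
  [NormedAddCommGroup F] [NormedSpace ℝ F] {q : ℝ → X → F} {s : Set ℝ} {t : ℝ}

lemma contDiff_slice {k : WithTop ℕ∞}
    (hq : ContDiffOn ℝ k (fun p : ℝ × X => q p.1 p.2) (s ×ˢ univ)) (ht : t ∈ s) :
    ContDiff ℝ k (q t) :=
  hq.comp_contDiff (contDiff_prodMk_right t) fun x => ⟨ht, mem_univ x⟩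

lemma hasDerivAt_slice (hs : IsOpen s)
    (hq : ContDiffOn ℝ 1 (fun p : ℝ × X => q p.1 p.2) (s ×ˢ univ)) (ht : t ∈ s) (x : X) :
    HasDerivAt (fun τ => q τ x) (fderiv ℝ (fun p : ℝ × X => q p.1 p.2) (t, x) (1, 0)) t :=
  ((hq.contDiffAt ((hs.prod isOpen_univ).mem_nhds ⟨ht, mem_univ x⟩)).differentiableAt
    one_ne_zero).hasFDerivAt.comp_hasDerivAt t ((hasDerivAt_id t).prodMk (hasDerivAt_const t x))

lemma continuousOn_deriv_slice (hs : IsOpen s)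
    (hq : ContDiffOn ℝ 1 (fun p : ℝ × X => q p.1 p.2) (s ×ˢ univ)) :
    ContinuousOn (fun p : ℝ × X => deriv (fun τ => q τ p.2) p.1) (s ×ˢ univ) :=
  ((hq.continuousOn_fderiv_of_isOpen (hs.prod isOpen_univ) le_rfl).clm_apply
    continuousOn_const).congr fun p hp => (hasDerivAt_slice hs hq hp.1 p.2).deriv

lemma hasDerivAt_integral_smul_of_hasCompactSupport [MeasurableSpace X] [BorelSpace X]
    {μ : Measure X} [IsFiniteMeasureOnCompacts μ] [SecondCountableTopologyEither X F]
    {φ : X → ℝ} (hφ : Continuous φ) (hφc : HasCompactSupport φ) (hs : IsOpen s)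
    (hq : ContDiffOn ℝ 1 (fun p : ℝ × X => q p.1 p.2) (s ×ˢ univ)) (ht : t ∈ s) :
    HasDerivAt (fun τ => ∫ x, φ x • q τ x ∂μ) (∫ x, φ x • deriv (fun τ => q τ x) t ∂μ) t := by
  have hcont : ContinuousOn (fun p : ℝ × X => φ p.2 • deriv (fun τ => q τ p.2) p.1)
      (s ×ˢ univ) :=
    (hφ.comp continuous_snd).continuousOn.smul (continuousOn_deriv_slice hs hq)
  have hqc : ∀ τ ∈ s, Continuous (q τ) := fun τ hτ => (contDiff_slice hq hτ).continuous
  obtain ⟨K, hKt, hKs, hK⟩ := local_compact_nhds (hs.mem_nhds ht)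
  obtain ⟨C, hC⟩ := (hK.prod hφc).exists_bound_of_continuousOn
    (hcont.mono (prod_mono hKs (subset_univ (tsupport φ))))
  have hbound : ∀ x, ∀ τ ∈ K, ‖φ x • deriv (fun σ => q σ x) τ‖
      ≤ (tsupport φ).indicator (fun _ => C) x := fun x τ hτ => by
    by_cases hx : x ∈ tsupport φ
    · simpa only [indicator_of_mem hx] using hC (τ, x) ⟨hτ, hx⟩
    · simp [hx, image_eq_zero_of_notMem_tsupport hx]
  refine (hasDerivAt_integral_of_dominated_loc_of_deriv_le hKt ?_ ?_ ?_ (ae_of_all _ hbound)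
    ((integrable_indicator_iff hφc.measurableSet).2 (integrableOn_const hφc.measure_ne_top))
    (ae_of_all _ fun x τ hτ =>
      (hasDerivAt_slice hs hq (hKs hτ) x).differentiableAt.hasDerivAt.const_smul (φ x))).2
  · exact (hs.eventually_mem ht).mono fun τ hτ => (hφ.smul (hqc τ hτ)).aestronglyMeasurable
  · exact (hφ.smul (hqc t ht)).integrable_of_hasCompactSupport hφc.smul_right
  · exact (hcont.comp_continuous (Continuous.prodMk_right t)
      fun x => ⟨ht, mem_univ x⟩).aestronglyMeasurable

end Slice

section Divergence

variable {X : Type*} [NormedAddCommGroup X] [NormedSpace ℝ X]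

/-- The divergence of a vector field, defined without coordinates as the trace of its derivative;
in orthonormal coordinates it is `∑ᵢ ∂ᵢVᵢ`, see `divergence_eq_sum`. -/
def divergence (V : X → X) (x : X) : ℝ :=
  LinearMap.trace ℝ X (fderiv ℝ V x)

lemma divergence_add {V W : X → X} {x : X} (hV : DifferentiableAt ℝ V x)
    (hW : DifferentiableAt ℝ W x) :
    divergence (fun y => V y + W y) x = divergence V x + divergence W x := by
  simp only [divergence, fderiv_fun_add hV hW, ContinuousLinearMap.toLinearMap_add, map_add]

lemma divergence_eq_sum_coord {ι : Type*} [Fintype ι] (b : Module.Basis ι ℝ X) (V : X → X)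
    (x : X) : divergence V x = ∑ i, b.coord i (fderiv ℝ V x (b i)) := by
  classical
  simp [divergence, LinearMap.trace_eq_matrix_trace ℝ b, Matrix.trace, LinearMap.toMatrix_apply]

lemma divergence_eq_sum {ι : Type*} [Fintype ι] [DecidableEq ι]
    {V : EuclideanSpace ℝ ι → EuclideanSpace ℝ ι} {x : EuclideanSpace ℝ ι}
    (hV : DifferentiableAt ℝ V x) :
    divergence V x = ∑ i, fderiv ℝ (fun y => V y i) x (EuclideanSpace.single i 1) := by
  rw [divergence_eq_sum_coord (EuclideanSpace.basisFun ι ℝ).toBasis]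
  refine Finset.sum_congr rfl fun i _ => ?_
  have hcomp : fderiv ℝ (fun y => V y i) x = (EuclideanSpace.proj i).comp (fderiv ℝ V x) :=
    ((EuclideanSpace.proj (𝕜 := ℝ) i).hasFDerivAt.comp x hV.hasFDerivAt).fderiv
  simp [hcomp]

variable [FiniteDimensional ℝ X]

lemma divergence_smul_const {f : X → ℝ} {x : X} (hf : DifferentiableAt ℝ f x) (v : X) :
    divergence (fun y => f y • v) x = fderiv ℝ f x v := by
  rw [divergence, fderiv_smul_const hf]
  exact LinearMap.trace_smulRight _ v

lemma integral_mul_divergence [MeasurableSpace X] [BorelSpace X] {μ : Measure X}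
    [μ.IsAddHaarMeasure] {φ : X → ℝ} {V : X → X} (hφ : ContDiff ℝ 1 φ)
    (hφc : HasCompactSupport φ) (hV : ContDiff ℝ 1 V) :
    ∫ x, φ x * divergence V x ∂μ = -∫ x, fderiv ℝ φ x (V x) ∂μ := by
  let b := Module.finBasis ℝ X
  let ℓ := fun i => (b.coord i).toContinuousLinearMap
  have hℓV : ∀ i, ContDiff ℝ 1 fun x => ℓ i (V x) := fun i => (ℓ i).contDiff.comp hV
  have hℓV' : ∀ i x, fderiv ℝ (fun x => ℓ i (V x)) x = (ℓ i).comp (fderiv ℝ V x) := fun i x =>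
    ((ℓ i).hasFDerivAt.comp x (hV.differentiable one_ne_zero x).hasFDerivAt).fderiv
  have hdiv : ∀ x, divergence V x = ∑ i, fderiv ℝ (fun x => ℓ i (V x)) x (b i) := fun x => by
    simp only [hℓV']
    exact divergence_eq_sum_coord b V x
  have hgrad : ∀ x, fderiv ℝ φ x (V x) = ∑ i, fderiv ℝ φ x (b i) * ℓ i (V x) := fun x => by
    conv_lhs => rw [← b.sum_repr (V x), map_sum]
    exact Finset.sum_congr rfl fun i _ => by
      rw [map_smul, smul_eq_mul, mul_comm, LinearMap.coe_toContinuousLinearMap', b.coord_apply]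
  have hint₁ : ∀ i, Integrable (fun x => φ x * fderiv ℝ (fun x => ℓ i (V x)) x (b i)) μ :=
    fun i => (hφ.continuous.mul (((hℓV i).continuous_fderiv one_ne_zero).clm_apply
      continuous_const)).integrable_of_hasCompactSupport hφc.mul_right
  have hint₂ : ∀ i, Integrable (fun x => fderiv ℝ φ x (b i) * ℓ i (V x)) μ := fun i =>
    (((hφ.continuous_fderiv one_ne_zero).clm_apply continuous_const).mul
      (hℓV i).continuous).integrable_of_hasCompactSupport (hφc.fderiv_apply ℝ _).mul_right
  have hint₃ : ∀ i, Integrable (fun x => φ x * ℓ i (V x)) μ := fun i =>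
    (hφ.continuous.mul (hℓV i).continuous).integrable_of_hasCompactSupport hφc.mul_right
  simp_rw [hdiv, hgrad, Finset.mul_sum]
  rw [integral_finsetSum _ fun i _ => hint₁ i, integral_finsetSum _ fun i _ => hint₂ i,
    ← Finset.sum_neg_distrib]
  exact Finset.sum_congr rfl fun i _ =>
    integral_mul_fderiv_eq_neg_fderiv_mul_of_integrable (hint₂ i) (hint₁ i) (hint₃ i)
      (fun x _ => hφ.differentiable one_ne_zero x)
      (fun x _ => (hℓV i).differentiable one_ne_zero x)

end Divergence

section Cutoff

variable {X : Type*} [NormedAddCommGroup X] [NormedSpace ℝ X] [FiniteDimensional ℝ X]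

variable (X) in
/-- The reference bump function behind `cutoff`: `1` on the unit ball and supported in the ball of
radius `2`. -/
def unitBump : ContDiffBump (0 : X) := ⟨1, 2, one_pos, one_lt_two⟩

/-- The cutoff at scale `N + 1`, used to exhaust `X` by compactly supported test functions. -/
def cutoff (N : ℕ) (x : X) : ℝ := unitBump X ((N + 1 : ℝ)⁻¹ • x)

lemma contDiff_cutoff (N : ℕ) : ContDiff ℝ 1 (cutoff N : X → ℝ) :=
  (unitBump X).contDiff.comp (contDiff_const_smul _)

lemma hasCompactSupport_cutoff (N : ℕ) : HasCompactSupport (cutoff N : X → ℝ) :=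
  (unitBump X).hasCompactSupport.comp_smul (by positivity)

lemma abs_cutoff_le_one (N : ℕ) (x : X) : |cutoff N x| ≤ 1 := by
  rw [cutoff, abs_of_nonneg (unitBump X).nonneg]
  exact (unitBump X).le_one

lemma fderiv_cutoff (N : ℕ) (x : X) :
    fderiv ℝ (cutoff N) x = (N + 1 : ℝ)⁻¹ • fderiv ℝ (unitBump X) ((N + 1 : ℝ)⁻¹ • x) :=
  fderiv_comp_smul _

lemma eventually_cutoff_eq_one (x : X) :
    ∀ᶠ N in atTop, cutoff N x = 1 ∧ fderiv ℝ (cutoff N) x = 0 := by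
  obtain ⟨m, hm⟩ := exists_nat_gt ‖x‖
  filter_upwards [eventually_ge_atTop m] with N hN
  have hball : (N + 1 : ℝ)⁻¹ • x ∈ Metric.ball (0 : X) (unitBump X).rIn := by
    have hmN : (m : ℝ) ≤ N := by exact_mod_cast hN
    rw [mem_ball_zero_iff, norm_smul, Real.norm_of_nonneg (by positivity),
      inv_mul_lt_iff₀ (by positivity), show (unitBump X).rIn = 1 from rfl]
    linarith
  refine ⟨(unitBump X).one_of_mem_closedBall (Metric.ball_subset_closedBall hball), ?_⟩
  rw [fderiv_cutoff, ((unitBump X).eventuallyEq_one_of_mem_ball hball).fderiv_eq]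
  simp

variable (X) in
/-- Dilation divides the gradient by `N + 1` and confines it to `‖x‖ ≤ 2 (N + 1)`. -/
lemma exists_norm_fderiv_cutoff_le :
    ∃ K, 0 ≤ K ∧ ∀ N (x : X), (1 + ‖x‖) * ‖fderiv ℝ (cutoff N) x‖ ≤ K := by
  have hcont : Continuous (fderiv ℝ (unitBump X)) :=
    (unitBump X).contDiff.continuous_fderiv one_ne_zero
  obtain ⟨K, hK⟩ := Continuous.bounded_above_of_compact_support
    (((continuous_const (y := (1 : ℝ))).add continuous_norm).smul hcont)
    (((unitBump X).hasCompactSupport.fderiv ℝ).smul_left (f := fun x : X => 1 + ‖x‖))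
  have hbump : ∀ y : X, (1 + ‖y‖) * ‖fderiv ℝ (unitBump X) y‖ ≤ K := fun y => by
    simpa [norm_smul, abs_of_nonneg (add_nonneg zero_le_one (norm_nonneg y))] using hK y
  refine ⟨K, (norm_nonneg _).trans (hK 0), fun N x => ?_⟩
  have hpos : (0 : ℝ) < (N + 1 : ℝ)⁻¹ := by positivity
  have hle : (N + 1 : ℝ)⁻¹ ≤ 1 := inv_le_one_of_one_le₀ (by simp)
  calc (1 + ‖x‖) * ‖fderiv ℝ (cutoff N) x‖
      = ((N + 1 : ℝ)⁻¹ + ‖(N + 1 : ℝ)⁻¹ • x‖)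
          * ‖fderiv ℝ (unitBump X) ((N + 1 : ℝ)⁻¹ • x)‖ := by
        rw [fderiv_cutoff, norm_smul, norm_smul, Real.norm_of_nonneg hpos.le]
        ring
    _ ≤ (1 + ‖(N + 1 : ℝ)⁻¹ • x‖) * ‖fderiv ℝ (unitBump X) ((N + 1 : ℝ)⁻¹ • x)‖ := by gcongr
    _ ≤ K := hbump _

lemma tendsto_integral_cutoff_mul [MeasurableSpace X] [BorelSpace X] {μ : Measure X} {f : X → ℝ}
    (hf : Integrable f μ) :
    Tendsto (fun N => ∫ x, cutoff N x * f x ∂μ) atTop (𝓝 (∫ x, f x ∂μ)) := by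
  refine tendsto_integral_of_dominated_convergence _
    (fun N => (contDiff_cutoff N).continuous.aestronglyMeasurable.mul hf.1) hf.norm
    (fun N => ae_of_all _ fun x => ?_) (ae_of_all _ fun x => ?_)
  · rw [norm_mul]
    exact mul_le_of_le_one_left (norm_nonneg _) (abs_cutoff_le_one N x)
  · exact tendsto_const_nhds.congr' ((eventually_cutoff_eq_one x).mono fun N h => by simp [h.1])

end Cutoff

lemma fderiv_half_norm_sq {X : Type*} [NormedAddCommGroup X] [InnerProductSpace ℝ X]
    (x v : X) :
    fderiv ℝ (fun y : X => (1 / 2 : ℝ) * ‖y‖ ^ 2) x v = ⟪x, v⟫_ℝ := by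
  rw [((hasStrictFDerivAt_norm_sq x).hasFDerivAt.const_mul (1 / 2 : ℝ)).fderiv]
  simp

/-- `r` dominates the gradient of the weight `w`, and `w` itself up to a factor `1 + ‖x‖`. This is
the growth for which a flux `V` with `r ‖V‖` integrable has no contribution from infinity to the
moment `∫ w q`. -/
structure IsMomentWeight {X : Type*} [NormedAddCommGroup X] [NormedSpace ℝ X] (w r : X → ℝ) :
    Prop where
  contDiff : ContDiff ℝ 1 w
  abs_le : ∀ x, |w x| ≤ (1 + ‖x‖) * r x
  norm_fderiv_le : ∀ x, ‖fderiv ℝ w x‖ ≤ r x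

namespace IsMomentWeight

section Examples

variable {X : Type*} [NormedAddCommGroup X]

lemma one [NormedSpace ℝ X] : IsMomentWeight (fun _ : X => 1) (fun _ => 1) where
  contDiff := contDiff_const
  abs_le x := by simp
  norm_fderiv_le x := by simp

lemma clm [NormedSpace ℝ X] (ℓ : X →L[ℝ] ℝ) : IsMomentWeight ℓ (fun _ => ‖ℓ‖) where
  contDiff := ℓ.contDiff
  abs_le x := (ℓ.le_opNorm x).trans (by nlinarith [norm_nonneg ℓ])
  norm_fderiv_le x := by rw [ℓ.fderiv]

lemma half_norm_sq [InnerProductSpace ℝ X] :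
    IsMomentWeight (fun x : X => (1 / 2 : ℝ) * ‖x‖ ^ 2) (fun x => ‖x‖) where
  contDiff := contDiff_const.mul (contDiff_norm_sq ℝ)
  abs_le x := by
    rw [abs_of_nonneg (by positivity)]
    nlinarith [norm_nonneg x]
  norm_fderiv_le x := ContinuousLinearMap.opNorm_le_bound _ (norm_nonneg x) fun v => by
    rw [fderiv_half_norm_sq]
    exact norm_inner_le_norm x v

end Examples

variable {X : Type*} [NormedAddCommGroup X] [NormedSpace ℝ X] [FiniteDimensional ℝ X]
  {w r : X → ℝ}

lemma fderiv_cutoff_mul (hw : IsMomentWeight w r) (N : ℕ) (x v : X) :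
    fderiv ℝ (fun y => cutoff N y * w y) x v
      = cutoff N x * fderiv ℝ w x v + w x * fderiv ℝ (cutoff N) x v := by
  rw [fderiv_fun_mul ((contDiff_cutoff N).differentiable one_ne_zero x)
    (hw.contDiff.differentiable one_ne_zero x)]
  rfl

lemma exists_norm_fderiv_cutoff_mul_le (hw : IsMomentWeight w r) :
    ∃ K, 0 ≤ K ∧
      ∀ N x v, ‖fderiv ℝ (fun y => cutoff N y * w y) x v‖ ≤ K * (r x * ‖v‖) := by
  obtain ⟨K, hK, hgrad⟩ := exists_norm_fderiv_cutoff_le X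
  refine ⟨1 + K, by positivity, fun N x v => ?_⟩
  have hr : 0 ≤ r x := (norm_nonneg _).trans (hw.norm_fderiv_le x)
  have hinner : ‖cutoff N x * fderiv ℝ w x v‖ ≤ r x * ‖v‖ := by
    rw [norm_mul]
    exact (mul_le_of_le_one_left (norm_nonneg _) (abs_cutoff_le_one N x)).trans
      ((fderiv ℝ w x).le_of_opNorm_le (hw.norm_fderiv_le x) v)
  have hedge : ‖w x * fderiv ℝ (cutoff N) x v‖ ≤ K * (r x * ‖v‖) := calc
    ‖w x * fderiv ℝ (cutoff N) x v‖
      ≤ ((1 + ‖x‖) * r x) * (‖fderiv ℝ (cutoff N) x‖ * ‖v‖) := by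
        rw [norm_mul]
        exact mul_le_mul (hw.abs_le x) ((fderiv ℝ (cutoff N) x).le_opNorm v) (norm_nonneg _)
          (by positivity)
    _ = ((1 + ‖x‖) * ‖fderiv ℝ (cutoff N) x‖) * (r x * ‖v‖) := by ring
    _ ≤ K * (r x * ‖v‖) := by gcongr; exact hgrad N x
  rw [hw.fderiv_cutoff_mul]
  linarith [norm_add_le (cutoff N x * fderiv ℝ w x v) (w x * fderiv ℝ (cutoff N) x v)]

variable [MeasurableSpace X] [BorelSpace X] {μ : Measure X} {V : X → X}

lemma tendsto_integral_fderiv_cutoff_mul (hw : IsMomentWeight w r) (hV : Continuous V)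
    (hrV : Integrable (fun x => r x * ‖V x‖) μ) :
    Tendsto (fun N => ∫ x, fderiv ℝ (fun y => cutoff N y * w y) x (V x) ∂μ) atTop
      (𝓝 (∫ x, fderiv ℝ w x (V x) ∂μ)) := by
  obtain ⟨K, -, hK⟩ := hw.exists_norm_fderiv_cutoff_mul_le
  refine tendsto_integral_of_dominated_convergence _
    (fun N => ((((contDiff_cutoff N).mul hw.contDiff).continuous_fderiv
      one_ne_zero).clm_apply hV).aestronglyMeasurable)
    (hrV.const_mul K) (fun N => ae_of_all _ fun x => hK N x _) (ae_of_all _ fun x => ?_)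
  refine tendsto_const_nhds.congr' ((eventually_cutoff_eq_one x).mono fun N h => ?_)
  simp [hw.fderiv_cutoff_mul, h.1, h.2]

lemma integral_mul_divergence [μ.IsAddHaarMeasure] (hw : IsMomentWeight w r)
    (hV : ContDiff ℝ 1 V) (hrV : Integrable (fun x => r x * ‖V x‖) μ)
    (hdiv : Integrable (fun x => w x * divergence V x) μ) :
    ∫ x, w x * divergence V x ∂μ = -∫ x, fderiv ℝ w x (V x) ∂μ := by
  refine tendsto_nhds_unique (tendsto_integral_cutoff_mul hdiv) ?_
  refine (hw.tendsto_integral_fderiv_cutoff_mul hV.continuous hrV).neg.congr fun N => ?_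
  simp_rw [← mul_assoc]
  exact (_root_.integral_mul_divergence ((contDiff_cutoff N).mul hw.contDiff)
    (hasCompactSupport_cutoff N).mul_right hV).symm

end IsMomentWeight

/-- The conservation law `∂ₜq + div V = 0` on `X × [a, b]` for a `C¹` density `q` with flux `V`. -/
structure IsConservationLaw {X : Type*} [NormedAddCommGroup X] [NormedSpace ℝ X]
    (q : ℝ → X → ℝ) (V : ℝ → X → X) (a b : ℝ) : Prop where
  contDiffOn_density : ContDiffOn ℝ 1 (fun p : ℝ × X => q p.1 p.2) (Icc a b ×ˢ univ)
  contDiff_flux : ∀ t ∈ Icc a b, ContDiff ℝ 1 (V t)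
  deriv_add_divergence : ∀ t ∈ Icc a b, ∀ x, deriv (fun τ => q τ x) t + divergence (V t) x = 0

namespace IsConservationLaw

variable {X : Type*} [NormedAddCommGroup X] [NormedSpace ℝ X] [FiniteDimensional ℝ X]
  [MeasurableSpace X] [BorelSpace X] {μ : Measure X} [μ.IsAddHaarMeasure]
  {q : ℝ → X → ℝ} {V : ℝ → X → X} {a b t : ℝ}

lemma hasDerivAt_integral_mul (h : IsConservationLaw q V a b) {ψ : X → ℝ} (hψ : ContDiff ℝ 1 ψ)
    (hψc : HasCompactSupport ψ) (ht : t ∈ Ioo a b) :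
    HasDerivAt (fun τ => ∫ x, ψ x * q τ x ∂μ) (∫ x, fderiv ℝ ψ x (V t x) ∂μ) t := by
  have ht' : t ∈ Icc a b := Ioo_subset_Icc_self ht
  refine (hasDerivAt_integral_smul_of_hasCompactSupport hψ.continuous hψc isOpen_Ioo
    (h.contDiffOn_density.mono (prod_mono Ioo_subset_Icc_self subset_rfl)) ht).congr_deriv ?_
  simp_rw [eq_neg_of_add_eq_zero_left (h.deriv_add_divergence t ht' _), smul_eq_mul, mul_neg]
  rw [integral_neg, integral_mul_divergence hψ hψc (h.contDiff_flux t ht'), neg_neg]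

lemma isPrimitiveOn_moment (h : IsConservationLaw q V a b) {w r : X → ℝ} {C : ℝ}
    (hw : IsMomentWeight w r) (hwq : ∀ t ∈ Icc a b, Integrable (fun x => w x * q t x) μ)
    (hrV : ∀ t ∈ Icc a b, Integrable (fun x => r x * ‖V t x‖) μ)
    (hC : ∀ t ∈ Icc a b, ∫ x, r x * ‖V t x‖ ∂μ ≤ C) :
    IsPrimitiveOn (fun t => ∫ x, w x * q t x ∂μ) (fun t => ∫ x, fderiv ℝ w x (V t x) ∂μ) a b := by
  obtain ⟨K, hK, hbound⟩ := hw.exists_norm_fderiv_cutoff_mul_le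
  have hψ : ∀ N, ContDiff ℝ 1 fun x => cutoff N x * w x :=
    fun N => (contDiff_cutoff N).mul hw.contDiff
  have hψc : ∀ N, HasCompactSupport fun x => cutoff N x * w x :=
    fun N => (hasCompactSupport_cutoff N).mul_right
  refine IsPrimitiveOn.of_tendsto (C := K * C)
    (Φ := fun N τ => ∫ x, (cutoff N x * w x) * q τ x ∂μ) (fun N => ?_)
    (fun N τ hτ => h.hasDerivAt_integral_mul (hψ N) (hψc N) hτ)
    (fun N τ hτ => ?_) (fun τ hτ => ?_) (fun τ hτ => ?_)
  · refine continuousOn_integral_of_compact_support (hψc N) ?_ fun τ x _ hx => ?_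
    · exact ((hψ N).continuous.comp continuous_snd).continuousOn.mul
        h.contDiffOn_density.continuousOn
    · simp only [image_eq_zero_of_notMem_tsupport hx, zero_mul]
  · have hτ' := Ioo_subset_Icc_self hτ
    refine (norm_integral_le_of_norm_le ((hrV τ hτ').const_mul K)
      (ae_of_all _ fun x => hbound N x _)).trans ?_
    rw [integral_const_mul]
    exact mul_le_mul_of_nonneg_left (hC τ hτ') hK
  · simp_rw [mul_assoc]
    exact tendsto_integral_cutoff_mul (hwq τ hτ)
  · have hτ' := Ioo_subset_Icc_self hτ
    exact hw.tendsto_integral_fderiv_cutoff_mul (h.contDiff_flux τ hτ').continuous (hrV τ hτ')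

lemma integral_deriv_eq_zero (h : IsConservationLaw q V a b) (ht : t ∈ Icc a b)
    (hV : Integrable (V t) μ) : ∫ x, deriv (fun τ => q τ x) t ∂μ = 0 := by
  simp_rw [eq_neg_of_add_eq_zero_left (h.deriv_add_divergence t ht _)]
  rw [integral_neg, neg_eq_zero]
  by_cases hdiv : Integrable (divergence (V t)) μ
  · simpa using IsMomentWeight.one.integral_mul_divergence (h.contDiff_flux t ht)
      (by simpa using hV.norm) (by simpa using hdiv)
  · -- The integral of a nonintegrable function is `0` by convention.
    exact integral_undef hdiv

end IsConservationLaw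

namespace FullEulerSolution

variable {n : ℕ} {γ cν s₁ T : ℝ} (S : FullEulerSolution n γ cν s₁ T) {t : ℝ}

/-- The pressure `p = exp(s/c_ν) ρ^γ`. -/
def pressure (t : ℝ) (x : EuclideanSpace ℝ (Fin n)) : ℝ :=
  Real.exp (S.s t x / cν) * S.ρ t x ^ γ

/-- The energy density `(1/2)ρ|u|² + p/(γ−1)`, whose integral is the total energy. -/
def energyDensity (t : ℝ) (x : EuclideanSpace ℝ (Fin n)) : ℝ :=
  (1 / 2 : ℝ) * S.ρ t x * ‖S.u t x‖ ^ 2 + S.pressure t x / (γ - 1)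

/-- The energy flux `((1/2)ρ|u|² + γp/(γ−1))u`. -/
def energyFlux (t : ℝ) (x : EuclideanSpace ℝ (Fin n)) : EuclideanSpace ℝ (Fin n) :=
  ((1 / 2 : ℝ) * S.ρ t x * ‖S.u t x‖ ^ 2 + γ * S.pressure t x / (γ - 1)) • S.u t x

/-- The flux `ρuᵢu + p eᵢ` of the `i`-th momentum component; including the pressure makes the
momentum equation a conservation law. -/
def momentumFlux (i : Fin n) (t : ℝ) (x : EuclideanSpace ℝ (Fin n)) : EuclideanSpace ℝ (Fin n) :=
  (S.ρ t x * S.u t x i) • S.u t x + S.pressure t x • EuclideanSpace.single i (1 : ℝ)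

/-- The virial `2 E_k + n(γ−1) E_i`, the integrated trace of the momentum flux tensor
`ρ u ⊗ u + p I`. -/
def virial (t : ℝ) : ℝ := 2 * S.Ek t + n * (γ - 1) * S.Ei t

section Regularity

lemma contDiffOn_pressure (hγ : 1 < γ) :
    ContDiffOn ℝ 1 (fun p : ℝ × EuclideanSpace ℝ (Fin n) => S.pressure p.1 p.2)
      (Icc 0 T ×ˢ univ) :=
  (S.smooth_s.div_const cν).exp.mul (S.smooth_ρ.rpow_const_of_le (by simpa using hγ.le))

lemma contDiff_ρ (ht : t ∈ Icc 0 T) : ContDiff ℝ 1 (S.ρ t) :=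
  contDiff_slice S.smooth_ρ ht

lemma contDiff_u (ht : t ∈ Icc 0 T) : ContDiff ℝ 1 (S.u t) :=
  contDiff_slice S.smooth_u ht

lemma contDiff_pressure (hγ : 1 < γ) (ht : t ∈ Icc 0 T) : ContDiff ℝ 1 (S.pressure t) :=
  contDiff_slice (S.contDiffOn_pressure hγ) ht

lemma contDiff_energyFlux (hγ : 1 < γ) (ht : t ∈ Icc 0 T) : ContDiff ℝ 1 (S.energyFlux t) :=
  (((contDiff_const.mul (S.contDiff_ρ ht)).mul ((S.contDiff_u ht).norm_sq ℝ)).add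
    ((contDiff_const.mul (S.contDiff_pressure hγ ht)).div_const _)).smul (S.contDiff_u ht)

lemma contDiff_momentumFlux (hγ : 1 < γ) (i : Fin n) (ht : t ∈ Icc 0 T) :
    ContDiff ℝ 1 (S.momentumFlux i t) := by
  have hρ := S.contDiff_ρ ht
  have hu := S.contDiff_u ht
  have hp := S.contDiff_pressure hγ ht
  unfold momentumFlux
  fun_prop

lemma exists_norm_u_le (ht : t ∈ Icc 0 T) : ∃ C, ∀ x, ‖S.u t x‖ ≤ C := by
  have hbdd : S.u t =O[cocompact _] (1 : EuclideanSpace ℝ (Fin n) → ℝ) := by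
    rw [← Metric.cobounded_eq_cocompact]
    exact (tendsto_zero_iff_norm_tendsto_zero.2 (S.decay_u t ht)).isBigO_one ℝ
  obtain ⟨C, hC⟩ := ((S.contDiff_u ht).continuous.isBounded_range_iff_isBigO.2
    hbdd).exists_norm_le
  exact ⟨C, fun x => hC _ (mem_range_self x)⟩

end Regularity

section ConservationLaws

lemma mass_conservation :
    IsConservationLaw S.ρ (fun t x => S.ρ t x • S.u t x) 0 T where
  contDiffOn_density := S.smooth_ρ
  contDiff_flux t ht := (S.contDiff_ρ ht).smul (S.contDiff_u ht)
  deriv_add_divergence t ht x := by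
    have hρu : ContDiff ℝ 1 fun x => S.ρ t x • S.u t x := (S.contDiff_ρ ht).smul (S.contDiff_u ht)
    rw [divergence_eq_sum (hρu.differentiable one_ne_zero x)]
    exact S.mass_eq t ht x

lemma energy_conservation (hγ : 1 < γ) :
    IsConservationLaw S.energyDensity S.energyFlux 0 T where
  contDiffOn_density := ((contDiffOn_const.mul S.smooth_ρ).mul (S.smooth_u.norm_sq ℝ)).add
    ((S.contDiffOn_pressure hγ).div_const _)
  contDiff_flux _ ht := S.contDiff_energyFlux hγ ht
  deriv_add_divergence t ht x := by
    rw [divergence_eq_sum ((S.contDiff_energyFlux hγ ht).differentiable one_ne_zero x)]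
    exact S.energy_eq t ht x

lemma divergence_momentumFlux (hγ : 1 < γ) (ht : t ∈ Icc 0 T) (i : Fin n)
    (x : EuclideanSpace ℝ (Fin n)) :
    divergence (S.momentumFlux i t) x
      = ∑ j, fderiv ℝ (fun y => S.ρ t y * S.u t y i * S.u t y j) x (EuclideanSpace.single j 1)
        + fderiv ℝ (S.pressure t) x (EuclideanSpace.single i 1) := by
  have hρ := (S.contDiff_ρ ht).differentiable one_ne_zero
  have hu := (S.contDiff_u ht).differentiable one_ne_zero
  have hp := (S.contDiff_pressure hγ ht).differentiable one_ne_zero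
  have hρu : Differentiable ℝ fun y => (S.ρ t y * S.u t y i) • S.u t y := by fun_prop
  unfold momentumFlux
  rw [divergence_add (hρu x) ((hp x).smul_const _), divergence_smul_const (hp x),
    divergence_eq_sum (hρu x)]
  rfl

lemma momentum_conservation (hγ : 1 < γ) (i : Fin n) :
    IsConservationLaw (fun t x => S.ρ t x * S.u t x i) (S.momentumFlux i) 0 T where
  contDiffOn_density := S.smooth_ρ.mul
    ((EuclideanSpace.proj (𝕜 := ℝ) i).contDiff.comp_contDiffOn S.smooth_u)
  contDiff_flux _ ht := S.contDiff_momentumFlux hγ i ht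
  deriv_add_divergence t ht x := by
    rw [S.divergence_momentumFlux hγ ht, ← add_assoc]
    exact S.momentum_eq t ht x i

end ConservationLaws

section Energy

lemma pressure_nonneg (ht : t ∈ Icc 0 T) (x : EuclideanSpace ℝ (Fin n)) : 0 ≤ S.pressure t x :=
  mul_nonneg (Real.exp_nonneg _) (Real.rpow_nonneg (S.ρ_nonneg t ht x) _)

lemma Ek_nonneg (ht : t ∈ Icc 0 T) : 0 ≤ S.Ek t :=
  mul_nonneg (by norm_num) (integral_nonneg fun x =>
    mul_nonneg (S.ρ_nonneg t ht x) (sq_nonneg _))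

lemma Ei_nonneg (hγ : 1 < γ) (ht : t ∈ Icc 0 T) : 0 ≤ S.Ei t :=
  mul_nonneg (one_div_nonneg.2 (sub_nonneg.2 hγ.le)) (integral_nonneg (S.pressure_nonneg ht))

lemma integrable_pressure (ht : t ∈ Icc 0 T) : Integrable (S.pressure t) := S.int_p t ht

lemma integral_ρ_mul_norm_u_sq : ∫ x, S.ρ t x * ‖S.u t x‖ ^ 2 = 2 * S.Ek t := by
  rw [Ek]
  ring

lemma integral_pressure (hγ : 1 < γ) : ∫ x, S.pressure t x = (γ - 1) * S.Ei t := by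
  have hγ₀ : γ - 1 ≠ 0 := (sub_pos.2 hγ).ne'
  rw [Ei, ← mul_assoc, mul_one_div_cancel hγ₀, one_mul]
  rfl

lemma integral_energyDensity (ht : t ∈ Icc 0 T) : ∫ x, S.energyDensity t x = S.E t := by
  simp_rw [energyDensity, mul_assoc (1 / 2 : ℝ)]
  rw [integral_add ((S.int_ρu2 t ht).const_mul _) ((S.integrable_pressure ht).div_const _),
    integral_const_mul, integral_div, E, Ek, Ei, one_div_mul_eq_div, one_div_mul_eq_div]
  rfl

lemma integrable_energyFlux (ht : t ∈ Icc 0 T) : Integrable (S.energyFlux t) := by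
  obtain ⟨C, hC⟩ := S.exists_norm_u_le ht
  have hcoeff : Integrable fun x =>
      (1 / 2 : ℝ) * S.ρ t x * ‖S.u t x‖ ^ 2 + γ * S.pressure t x / (γ - 1) := by
    simp_rw [mul_assoc (1 / 2 : ℝ)]
    exact ((S.int_ρu2 t ht).const_mul _).add
      (((S.integrable_pressure ht).const_mul _).div_const _)
  exact hcoeff.smul_bdd C (S.contDiff_u ht).continuous.aestronglyMeasurable (ae_of_all _ hC)

lemma E_eq_E_zero (hγ : 1 < γ) (ht : t ∈ Icc 0 T) : S.E t = S.E 0 := by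
  have hderiv : ∀ τ ∈ Icc 0 T, HasDerivAt (fun τ => ∫ x, S.energyDensity τ x) 0 τ := fun τ hτ =>
    (S.hE τ hτ).congr_deriv ((S.energy_conservation hγ).integral_deriv_eq_zero hτ
      (S.integrable_energyFlux hτ))
  rw [← S.integral_energyDensity ht,
    ← S.integral_energyDensity (left_mem_Icc.2 (ht.1.trans ht.2))]
  exact constant_of_has_deriv_right_zero
    (fun τ hτ => (hderiv τ hτ).continuousAt.continuousWithinAt)
    (fun τ hτ => (hderiv τ (Ico_subset_Icc_self hτ)).hasDerivWithinAt) t ht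

lemma Ek_add_Ei (hγ : 1 < γ) (ht : t ∈ Icc 0 T) : S.Ek t + S.Ei t = S.E 0 :=
  S.E_eq_E_zero hγ ht

lemma min_mul_E_le_virial (hγ : 1 < γ) (ht : t ∈ Icc 0 T) :
    2 * (min 1 (n * (γ - 1) / 2) * S.E 0) ≤ S.virial t := by
  rw [← S.Ek_add_Ei hγ ht, virial]
  have hk := mul_le_mul_of_nonneg_right (min_le_left 1 (n * (γ - 1) / 2)) (S.Ek_nonneg ht)
  have hi := mul_le_mul_of_nonneg_right (min_le_right 1 (n * (γ - 1) / 2)) (S.Ei_nonneg hγ ht)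
  linarith

lemma virial_le_max_mul_E (hγ : 1 < γ) (ht : t ∈ Icc 0 T) :
    S.virial t ≤ 2 * (max 1 (n * (γ - 1) / 2) * S.E 0) := by
  rw [← S.Ek_add_Ei hγ ht, virial]
  have hk := mul_le_mul_of_nonneg_right (le_max_left 1 (n * (γ - 1) / 2)) (S.Ek_nonneg ht)
  have hi := mul_le_mul_of_nonneg_right (le_max_right 1 (n * (γ - 1) / 2)) (S.Ei_nonneg hγ ht)
  linarith

end Energy

section Inertia

lemma integral_half_norm_sq_mul_ρ : ∫ x, (1 / 2 : ℝ) * ‖x‖ ^ 2 * S.ρ t x = S.G t := by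
  rw [G, ← integral_const_mul]
  exact integral_congr_ae (ae_of_all _ fun x => by ring)

lemma integrable_norm_mul_norm_momentum (ht : t ∈ Icc 0 T) :
    Integrable fun x => ‖x‖ * ‖S.ρ t x • S.u t x‖ := by
  refine (S.int_ρux t ht).congr (ae_of_all _ fun x => ?_)
  simp only [norm_smul, Real.norm_of_nonneg (S.ρ_nonneg t ht x)]
  ring

lemma integral_norm_mul_norm_momentum_le (ht : t ∈ Icc 0 T) :
    ∫ x, ‖x‖ * ‖S.ρ t x • S.u t x‖ ≤ S.G t + S.Ek t := by
  have hG := (S.int_ρx2 t ht).const_mul (1 / 2)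
  have hEk := (S.int_ρu2 t ht).const_mul (1 / 2)
  rw [G, Ek, ← integral_const_mul, ← integral_const_mul, ← integral_add hG hEk]
  refine integral_mono (S.integrable_norm_mul_norm_momentum ht) (hG.add hEk) fun x => ?_
  have hρ := S.ρ_nonneg t ht x
  simp only [norm_smul, Real.norm_of_nonneg hρ]
  nlinarith [mul_nonneg hρ (sq_nonneg (‖x‖ - ‖S.u t x‖))]

lemma isPrimitiveOn_G (hγ : 1 < γ) : IsPrimitiveOn S.G S.F 0 T := by
  obtain ⟨C, hC⟩ := isCompact_Icc.exists_bound_of_continuousOn (s := Icc 0 T) (f := S.G)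
    fun τ hτ => (S.hG τ hτ).continuousAt.continuousWithinAt
  refine (S.mass_conservation.isPrimitiveOn_moment (μ := volume) (C := C + S.E 0)
    IsMomentWeight.half_norm_sq (fun τ hτ => ?_)
    (fun τ hτ => S.integrable_norm_mul_norm_momentum hτ) (fun τ hτ => ?_)).congr
    (fun τ _ => S.integral_half_norm_sq_mul_ρ) (fun τ _ => ?_)
  · exact ((S.int_ρx2 τ hτ).const_mul (1 / 2)).congr (ae_of_all _ fun x => by ring)
  · linarith [S.integral_norm_mul_norm_momentum_le hτ, S.Ek_add_Ei hγ hτ, S.Ei_nonneg hγ hτ,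
      le_of_abs_le (hC τ hτ)]
  · exact integral_congr_ae (ae_of_all _ fun x => by
      simp only [fderiv_half_norm_sq, inner_smul_right, real_inner_comm])

end Inertia

section MomentumWeight

lemma integrable_coord_mul_momentum (i : Fin n) (ht : t ∈ Icc 0 T) :
    Integrable fun x => x i * (S.ρ t x * S.u t x i) := by
  have hρ := (S.contDiff_ρ ht).continuous
  have hu := (S.contDiff_u ht).continuous
  refine (S.int_ρux t ht).mono' (by fun_prop) (ae_of_all _ fun x => ?_)
  have hρ₀ := S.ρ_nonneg t ht x
  rw [norm_mul, norm_mul, Real.norm_of_nonneg hρ₀, mul_comm ‖x i‖]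
  gcongr <;> exact PiLp.norm_apply_le _ i

lemma sum_integral_coord_mul_momentum (ht : t ∈ Icc 0 T) :
    ∑ i, ∫ x, x i * (S.ρ t x * S.u t x i) = S.F t := by
  rw [← integral_finsetSum _ fun i _ => S.integrable_coord_mul_momentum i ht]
  refine integral_congr_ae (ae_of_all _ fun x => ?_)
  simp only [PiLp.inner_apply, RCLike.inner_apply, conj_trivial, Finset.mul_sum]
  exact Finset.sum_congr rfl fun i _ => by ring

lemma norm_momentumFlux_le (ht : t ∈ Icc 0 T) (i : Fin n) (x : EuclideanSpace ℝ (Fin n)) :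
    ‖S.momentumFlux i t x‖ ≤ S.ρ t x * ‖S.u t x‖ ^ 2 + S.pressure t x := by
  have hρ := S.ρ_nonneg t ht x
  refine (norm_add_le _ _).trans (add_le_add ?_ ?_)
  · rw [norm_smul, norm_mul, Real.norm_of_nonneg hρ, sq, ← mul_assoc]
    gcongr
    exact PiLp.norm_apply_le _ i
  · simp [norm_smul, abs_of_nonneg (S.pressure_nonneg ht x)]

lemma integrable_momentumFlux (hγ : 1 < γ) (i : Fin n) (ht : t ∈ Icc 0 T) :
    Integrable (S.momentumFlux i t) :=
  ((S.int_ρu2 t ht).add (S.integrable_pressure ht)).mono'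
    (S.contDiff_momentumFlux hγ i ht).continuous.aestronglyMeasurable
    (ae_of_all _ (S.norm_momentumFlux_le ht i))

lemma integral_norm_momentumFlux_le (hγ : 1 < γ) (i : Fin n) (ht : t ∈ Icc 0 T) :
    ∫ x, ‖S.momentumFlux i t x‖ ≤ (γ + 1) * S.E 0 := by
  have hbound : ∫ x, (S.ρ t x * ‖S.u t x‖ ^ 2 + S.pressure t x)
      = 2 * S.Ek t + (γ - 1) * S.Ei t := by
    rw [integral_add (S.int_ρu2 t ht) (S.integrable_pressure ht), S.integral_ρ_mul_norm_u_sq,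
      S.integral_pressure hγ]
  calc ∫ x, ‖S.momentumFlux i t x‖
      ≤ 2 * S.Ek t + (γ - 1) * S.Ei t := hbound ▸
        integral_mono (S.integrable_momentumFlux hγ i ht).norm
          ((S.int_ρu2 t ht).add (S.integrable_pressure ht)) (S.norm_momentumFlux_le ht i)
    _ ≤ (γ + 1) * (S.Ek t + S.Ei t) := by nlinarith [S.Ek_nonneg ht, S.Ei_nonneg hγ ht]
    _ = (γ + 1) * S.E 0 := by rw [S.Ek_add_Ei hγ ht]

lemma sum_momentumFlux_apply (x : EuclideanSpace ℝ (Fin n)) :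
    ∑ i, S.momentumFlux i t x i = S.ρ t x * ‖S.u t x‖ ^ 2 + n * S.pressure t x := by
  simp only [momentumFlux, EuclideanSpace.real_norm_sq_eq, Finset.mul_sum]
  simp [Finset.sum_add_distrib, mul_assoc, sq]

lemma sum_integral_momentumFlux_apply (hγ : 1 < γ) (ht : t ∈ Icc 0 T) :
    ∑ i, ∫ x, S.momentumFlux i t x i = S.virial t := by
  have hcoord : ∀ i, Integrable fun x => S.momentumFlux i t x i := fun i =>
    (EuclideanSpace.proj (𝕜 := ℝ) i).integrable_comp (S.integrable_momentumFlux hγ i ht)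
  have hp : Integrable fun x => n * S.pressure t x := (S.integrable_pressure ht).const_mul _
  rw [← integral_finsetSum _ fun i _ => hcoord i]
  simp_rw [sum_momentumFlux_apply]
  rw [integral_add (S.int_ρu2 t ht) hp, integral_const_mul, S.integral_ρ_mul_norm_u_sq,
    S.integral_pressure hγ, virial, mul_assoc]

lemma isPrimitiveOn_F (hγ : 1 < γ) : IsPrimitiveOn S.F S.virial 0 T := by
  refine (IsPrimitiveOn.finsetSum (s := Finset.univ) fun i _ =>
    (S.momentum_conservation hγ i).isPrimitiveOn_moment (μ := volume)
      (C := ‖EuclideanSpace.proj (𝕜 := ℝ) i‖ * ((γ + 1) * S.E 0))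
      (IsMomentWeight.clm (EuclideanSpace.proj i))
      (fun τ hτ => S.integrable_coord_mul_momentum i hτ)
      (fun τ hτ => (S.integrable_momentumFlux hγ i hτ).norm.const_mul _)
      (fun τ hτ => ?_)).congr (fun τ hτ => S.sum_integral_coord_mul_momentum hτ) (fun τ hτ => ?_)
  · rw [integral_const_mul]
    gcongr
    exact S.integral_norm_momentumFlux_le hγ i hτ
  · simp only [ContinuousLinearMap.fderiv]
    exact S.sum_integral_momentumFlux_apply hγ hτ

end MomentumWeight

lemma inertia_min_max_bounds (hγ : 1 < γ) (ht : t ∈ Icc 0 T) :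
    min 1 (n * (γ - 1) / 2) * S.E 0 * t ^ 2 + S.F 0 * t + S.G 0 ≤ S.G t ∧
      S.G t ≤ max 1 (n * (γ - 1) / 2) * S.E 0 * t ^ 2 + S.F 0 * t + S.G 0 := by
  constructor
  · refine (IsPrimitiveOn.quadratic _ _ _ 0 T).le_of_le (S.isPrimitiveOn_G hγ) (by simp)
      (fun τ hτ => ?_) ht
    exact (IsPrimitiveOn.affine _ _ 0 T).le_of_le (S.isPrimitiveOn_F hγ) (by simp)
      (fun σ hσ => S.min_mul_E_le_virial hγ hσ) hτ
  · refine (S.isPrimitiveOn_G hγ).le_of_le (IsPrimitiveOn.quadratic _ _ _ 0 T) (by simp)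
      (fun τ hτ => ?_) ht
    exact (S.isPrimitiveOn_F hγ).le_of_le (IsPrimitiveOn.affine _ _ 0 T) (by simp)
      (fun σ hσ => S.virial_le_max_mul_E hγ hσ) hτ

end FullEulerSolution

lemma mul_sub_one_div_two_le_one_iff {n : ℕ} {γ : ℝ} (hn : 1 ≤ n) :
    n * (γ - 1) / 2 ≤ 1 ↔ γ ≤ 1 + 2 / n := by
  have hn₀ : (0 : ℝ) < n := by exact_mod_cast hn
  rw [div_le_one two_pos, ← le_div_iff₀' hn₀, sub_le_iff_le_add']

/-- **Lemma 3.3, full Euler case: two-sided bounds on the momentum of inertia.**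
If `1 < γ ≤ 1 + 2/n` then
`(n(γ−1)/2) E(0) t² + F(0) t + G(0) ≤ G(t) ≤ E(0) t² + F(0) t + G(0)`,
while if `γ > 1 + 2/n` then
`E(0) t² + F(0) t + G(0) ≤ G(t) ≤ (n(γ−1)/2) E(0) t² + F(0) t + G(0)`. -/
theorem FullEulerSolution.inertia_two_sided_bounds
    {n : ℕ} {γ cν s₁ T : ℝ} (hn : 1 ≤ n) (hγ : 1 < γ) (hcν : 0 < cν) (hT : 0 < T)
    (S : FullEulerSolution n γ cν s₁ T) :
    (γ ≤ 1 + 2 / n →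
      ∀ t ∈ Set.Icc 0 T,
        ((n : ℝ) * (γ - 1) / 2) * S.E 0 * t ^ 2 + S.F 0 * t + S.G 0 ≤ S.G t ∧
        S.G t ≤ S.E 0 * t ^ 2 + S.F 0 * t + S.G 0) ∧
    (1 + 2 / n < γ →
      ∀ t ∈ Set.Icc 0 T,
        S.E 0 * t ^ 2 + S.F 0 * t + S.G 0 ≤ S.G t ∧
        S.G t ≤ ((n : ℝ) * (γ - 1) / 2) * S.E 0 * t ^ 2 + S.F 0 * t + S.G 0) := by
  have hiff := mul_sub_one_div_two_le_one_iff (γ := γ) hn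
  refine ⟨fun hle t ht => ?_, fun hlt t ht => ?_⟩
  · have hcoef := hiff.2 hle
    simpa only [min_eq_right hcoef, max_eq_left hcoef, one_mul]
      using S.inertia_min_max_bounds hγ ht
  · have hcoef := (not_le.1 (mt hiff.1 hlt.not_ge)).le
    simpa only [min_eq_left hcoef, max_eq_right hcoef, one_mul]
      using S.inertia_min_max_bounds hγ ht
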